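/- Let a ≥ b ≥ 1, n = a + b, and let k be a positive integer with n ≥ k. Let R be a Haar-distributed random matrix from the real orthogonal group O(n), let I'_{ab} = diag(I_a, −I_b), and set W = (w_{ij}) = Rᵀ I'_{ab} R (a symmetric orthogonal random matrix, associated with the symmetric space O(n)/O(a)×O(b)). For any sequence i = (i_1,…,i_{2k}) in {1,…,n}, E[ w_{i_1 i_2} w_{i_3 i_4} ⋯ w_{i_{2k−1} i_{2k}} ] = Σ_{σ ∈ M_{2k}} Δ_σ(i) Wg^{BDI}(σ; a, b), where Wg^{BDI}(·; a, b) := T^{BDI}_{ab} ⋆ Wg^O(·; n) and T^{BDI}_{ab}(σ) = (a+b)^{ℓe(σ)} (a−b)^{ℓo(σ)}, with ℓe(σ) (resp. ℓo(σ)) the number of connected components of Γ(σ) whose size is ≡ 0 (resp. ≡ 2) modulo 4. -/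

import Mathlib

/-!
The moments `E[w_{i_1 i_2} ⋯ w_{i_{2k-1} i_{2k}}]` and the sum `∑_σ Δ_σ(i) Wg^{BDI}(σ; a, b)` are
two tensors of order `2k`, and they are shown to be equal by invariant theory.

Both are invariant under `O(n)`. For the moments this needs right invariance of the Haar measure,
which follows from left invariance by Fubini (`integral_inv`, `tact_momTensor`); for the sum it
holds because each pairing tensor `Δ_σ` is invariant (`tact_sum_DeltaO`).

Both have the same inner product with every `Δ_ρ`. Since `Δ_ρ` is invariant, the moment tensor
pairs with it like the deterministic tensor `(I'_{ab})^{⊗ k}`, and that pairing factorizes over the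
components of `Γ(ρ)`: a component of size `2m` contributes `a + (-1)^m b`. The result is
`T^{BDI}_{ab}(ρ)` (`sum_momTensor_DeltaO`, `sum_tens_Iab`). On the other side, the Gram matrix of
the `Δ_σ` with `σ ∈ M_{2k}` is `n^{c(σ⁻¹ ρ)}` (`gram`), and `Wg^O` is its inverse
(`weingarten_left_inverse`), so the sum also pairs with `Δ_ρ` to `T^{BDI}_{ab}(ρ)`
(`sum_sconv_DeltaO`).

An invariant tensor `v` orthogonal to all `Δ_ρ` vanishes (`eq_zero_of_invariant`). By polar
decomposition `⟨v, G^{⊗ 2k} v⟩ ≥ 0` for every real matrix `G` (`tquad_nonneg`). For `G` with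
independent standard Gaussian entries, Wick's theorem writes the expectation of this quantity as
the sum of `⟨v, Δ_σ⟩² = 0` over all pairings `σ` (`wick_kill`), so it vanishes for all `G` by
continuity, and `G = 1` gives `‖v‖² = 0`.
-/

/-!
Weingarten calculus for classical compact Lie groups and compact symmetric spaces
(S. Matsumoto, "Weingarten calculus for matrix ensembles associated with compact
symmetric spaces"): common definitions.

We index `{1,…,m}` by `Fin m` (0-indexed), so the pair `{2r-1, 2r}` becomes
`{2r, 2r+1}` for `r ∈ Fin k`.
-/

open MeasureTheory Finset Matrix

namespace WgPaper

/-- `lo r` is the (0-indexed) point `2r`, i.e. `2r - 1` in 1-indexed notation. -/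
def lo {k : ℕ} (i : Fin k) : Fin (2 * k) := ⟨2 * (i : ℕ), by have := i.isLt; omega⟩

/-- `hi r` is the (0-indexed) point `2r + 1`, i.e. `2r` in 1-indexed notation. -/
def hi {k : ℕ} (i : Fin k) : Fin (2 * k) := ⟨2 * (i : ℕ) + 1, by have := i.isLt; omega⟩

/-- Number of cycles of a permutation, counting fixed points as 1-cycles. -/
def cyc {m : ℕ} (σ : Equiv.Perm (Fin m)) : ℕ :=
  Multiset.card σ.cycleType + (Finset.univ.filter fun x => σ x = x).card

/-- Number of even-length cycles of a permutation. -/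
def evenCycles {m : ℕ} (σ : Equiv.Perm (Fin m)) : ℕ :=
  Multiset.card (σ.cycleType.filter fun d => d % 2 = 0)

/-- Number of odd-length cycles of a permutation, counting fixed points as 1-cycles. -/
def oddCycles {m : ℕ} (σ : Equiv.Perm (Fin m)) : ℕ :=
  Multiset.card (σ.cycleType.filter fun d => d % 2 = 1)
    + (Finset.univ.filter fun x => σ x = x).card

/-- The sign `ε(σ)` of a permutation, as an element of a commutative ring. -/
def sgn (R : Type*) [CommRing R] {m : ℕ} (σ : Equiv.Perm (Fin m)) : R :=
  ((Equiv.Perm.sign σ : ℤ) : R)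

/-- Full convolution on a finite group: `(f * g)(σ) = ∑_τ f(τ) g(τ⁻¹ σ)`. -/
def conv {G : Type*} [Group G] [Fintype G] {R : Type*} [CommRing R] (f g : G → R) : G → R :=
  fun σ => ∑ τ : G, f τ * g (τ⁻¹ * σ)

/-- The Dirac function at the identity permutation. -/
def deltaId {m : ℕ} {R : Type*} [CommRing R] : Equiv.Perm (Fin m) → R :=
  fun σ => if σ = 1 then 1 else 0

/-- The graph `Γ(σ)` on `{1,…,2k}` whose edges are `{2r-1, 2r}` and `{σ(2r-1), σ(2r)}`
(in 1-indexed notation) for `1 ≤ r ≤ k`. -/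
def Gamma {k : ℕ} (σ : Equiv.Perm (Fin (2 * k))) : SimpleGraph (Fin (2 * k)) :=
  SimpleGraph.fromRel fun a b =>
    (∃ r : Fin k, a = lo r ∧ b = hi r) ∨ ∃ r : Fin k, a = σ (lo r) ∧ b = σ (hi r)

/-- `c(σ)`, the number of connected components of `Γ(σ)`. -/
noncomputable def ccount {k : ℕ} (σ : Equiv.Perm (Fin (2 * k))) : ℕ :=
  Nat.card (Gamma σ).ConnectedComponent

/-- The number of vertices of a connected component of a graph. -/
noncomputable def compSize {V : Type*} {G : SimpleGraph V} (C : G.ConnectedComponent) : ℕ :=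
  Nat.card {v // G.connectedComponentMk v = C}

/-- `ℓe(σ)`: the number of connected components of `Γ(σ)` whose size is `≡ 0 (mod 4)`. -/
noncomputable def ecomp {k : ℕ} (σ : Equiv.Perm (Fin (2 * k))) : ℕ :=
  Nat.card {C : (Gamma σ).ConnectedComponent // compSize C % 4 = 0}

/-- `ℓo(σ)`: the number of connected components of `Γ(σ)` whose size is `≡ 2 (mod 4)`. -/
noncomputable def ocomp {k : ℕ} (σ : Equiv.Perm (Fin (2 * k))) : ℕ :=
  Nat.card {C : (Gamma σ).ConnectedComponent // compSize C % 4 = 2}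

/-- Membership in the hyperoctahedral subgroup `H_k ≤ S_{2k}`: each pair
`{2i-1, 2i}` is mapped onto some pair `{2j-1, 2j}`. -/
def IsHyper {k : ℕ} (ζ : Equiv.Perm (Fin (2 * k))) : Prop :=
  ∀ i : Fin k, ∃ j : Fin k, ({ζ (lo i), ζ (hi i)} : Finset (Fin (2 * k))) = {lo j, hi j}

/-- The defining property of the set `M_{2k}` of coset representatives of `S_{2k}/H_k`:
`σ(2i-1) < σ(2i)` for all `i` and `σ(1) < σ(3) < ⋯ < σ(2k-1)`. -/
def MProp {k : ℕ} (σ : Equiv.Perm (Fin (2 * k))) : Prop :=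
  (∀ i : Fin k, σ (lo i) < σ (hi i)) ∧ ∀ i j : Fin k, i < j → σ (lo i) < σ (lo j)

open scoped Classical in
/-- The set `M_{2k}` of coset representatives of `S_{2k}/H_k`, as a `Finset`. -/
noncomputable def Mset (k : ℕ) : Finset (Equiv.Perm (Fin (2 * k))) :=
  Finset.univ.filter MProp

/-- Reduced convolution: `(f ⋆ g)(σ) = ∑_{τ ∈ M_{2k}} f(τ) g(τ⁻¹ σ)`. -/
noncomputable def sconv {k : ℕ} {R : Type*} [CommRing R]
    (f g : Equiv.Perm (Fin (2 * k)) → R) : Equiv.Perm (Fin (2 * k)) → R :=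
  fun σ => ∑ τ ∈ Mset k, f τ * g (τ⁻¹ * σ)

open scoped Classical in
/-- The indicator function `1_k` of `H_k`. -/
noncomputable def oneH {k : ℕ} {R : Type*} [CommRing R] : Equiv.Perm (Fin (2 * k)) → R :=
  fun σ => if IsHyper σ then 1 else 0

open scoped Classical in
/-- The twisted indicator function `1_k^ε` of `H_k`: `σ ↦ ε(σ)` on `H_k`, `0` elsewhere. -/
noncomputable def oneHeps {k : ℕ} {R : Type*} [CommRing R] : Equiv.Perm (Fin (2 * k)) → R :=
  fun σ => if IsHyper σ then sgn R σ else 0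

/-- `δ_σ(i,j) = ∏_{s=1}^k δ_{i_{σ(s)}, j_s}`. -/
def deltaP {k : ℕ} {α : Type*} [DecidableEq α] {R : Type*} [CommRing R]
    (σ : Equiv.Perm (Fin k)) (i j : Fin k → α) : R :=
  ∏ s : Fin k, if i (σ s) = j s then 1 else 0

/-- `Δ_σ(i) = ∏_{s=1}^k δ_{i_{σ(2s-1)}, i_{σ(2s)}}`. -/
def DeltaO {k : ℕ} {α : Type*} [DecidableEq α] {R : Type*} [CommRing R]
    (σ : Equiv.Perm (Fin (2 * k))) (i : Fin (2 * k) → α) : R :=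
  ∏ s : Fin k, if i (σ (lo s)) = i (σ (hi s)) then 1 else 0

/-- The standard skew-symmetric matrix `J_n = ((O, I_n), (−I_n, O))`. -/
def Jmat (R : Type*) [CommRing R] (n : ℕ) : Matrix (Fin (2 * n)) (Fin (2 * n)) R :=
  Matrix.of fun p q =>
    if (p : ℕ) + n = (q : ℕ) then 1 else if (q : ℕ) + n = (p : ℕ) then -1 else 0

/-- `Δ'_σ(i) = ∏_{r=1}^k ⟨i_{σ(2r-1)}, i_{σ(2r)}⟩`, where `⟨p,q⟩` is the `(p,q)` entry
of `J_n`. -/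
def DeltaSp {k n : ℕ} (R : Type*) [CommRing R]
    (σ : Equiv.Perm (Fin (2 * k))) (i : Fin (2 * k) → Fin (2 * n)) : R :=
  ∏ s : Fin k, Jmat R n (i (σ (lo s))) (i (σ (hi s)))

/-- The signature matrix `I'_{a,n-a} = diag(I_a, −I_{n-a})`, of size `n`. -/
def Iab (R : Type*) [CommRing R] (n a : ℕ) : Matrix (Fin n) (Fin n) R :=
  Matrix.of fun p q => if p = q then (if (p : ℕ) < a then 1 else -1) else 0

/-- The signature matrix `I''_{a,n-a} = diag(I_a, −I_{n-a}, I_a, −I_{n-a})`, of size `2n`. -/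
def Ippab (R : Type*) [CommRing R] (n a : ℕ) : Matrix (Fin (2 * n)) (Fin (2 * n)) R :=
  Matrix.of fun p q => if p = q then (if (p : ℕ) % n < a then 1 else -1) else 0

/-- The unitary group `U(n)` of `n × n` complex unitary matrices. -/
abbrev UG (n : ℕ) := Matrix.unitaryGroup (Fin n) ℂ

/-- The real orthogonal group `O(n)`. -/
abbrev OG (n : ℕ) := Matrix.orthogonalGroup (Fin n) ℝ

noncomputable instance (n : ℕ) : MeasurableSpace (UG n) := borel _

noncomputable instance (n : ℕ) : MeasurableSpace (OG n) := borel _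

/-- A `2n × 2n` unitary matrix lies in the compact symplectic group `Sp(2n)`
iff `S J Sᵀ = J`. -/
def IsSymplectic {n : ℕ} (S : UG (2 * n)) : Prop :=
  (S : Matrix (Fin (2 * n)) (Fin (2 * n)) ℂ) * Jmat ℂ n
    * (S : Matrix (Fin (2 * n)) (Fin (2 * n)) ℂ)ᵀ = Jmat ℂ n

/-- The function `T^{D III}_n` on `S_{2k}`:
`σ ↦ ∑_p Δ_σ(p) ∏_{r=1}^k J_{p_{2r-1}, p_{2r}}`. -/
noncomputable def TDIII (n k : ℕ) : Equiv.Perm (Fin (2 * k)) → ℝ :=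
  fun σ => ∑ p : Fin (2 * k) → Fin (2 * n),
    DeltaO σ p * ∏ r : Fin k, Jmat ℝ n (p (lo r)) (p (hi r))

/-- The function `T^{C I}_n` on `S_{2k}`:
`σ ↦ ∑_p Δ'_σ(p) ∏_{r=1}^k (J I'_{nn})_{p_{2r-1}, p_{2r}}`. -/
noncomputable def TCI (n k : ℕ) : Equiv.Perm (Fin (2 * k)) → ℂ :=
  fun σ => ∑ p : Fin (2 * k) → Fin (2 * n),
    DeltaSp ℂ σ p * ∏ r : Fin k, (Jmat ℂ n * Iab ℂ (2 * n) n) (p (lo r)) (p (hi r))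

/-! ### Haar measure on the orthogonal group -/

instance OG.borelSpace (n : ℕ) : BorelSpace (OG n) := ⟨rfl⟩

instance OG.secondCountable (n : ℕ) : SecondCountableTopology (OG n) :=
  haveI : SecondCountableTopology (Matrix (Fin n) (Fin n) ℝ) :=
    inferInstanceAs (SecondCountableTopology (Fin n → Fin n → ℝ))
  inferInstanceAs (SecondCountableTopology ((OG n : Set (Matrix (Fin n) (Fin n) ℝ))))

/-- `O(n)` is closed and has entries in `[-1, 1]`. -/
instance OG.compactSpace (n : ℕ) : CompactSpace (OG n) := by
  have hK : IsCompact (Set.pi Set.univ fun _ : Fin n => Set.pi Set.univ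
      fun _ : Fin n => Set.Icc (-1 : ℝ) 1) :=
    isCompact_univ_pi fun _ => isCompact_univ_pi fun _ => isCompact_Icc
  have hcl : IsClosed (OG n : Set (Matrix (Fin n) (Fin n) ℝ)) := by
    have : (OG n : Set (Matrix (Fin n) (Fin n) ℝ)) = {A | A * star A = 1} := by
      ext A; exact Matrix.mem_orthogonalGroup_iff _ _
    rw [this]
    exact isClosed_eq (by fun_prop) continuous_const
  refine isCompact_iff_compactSpace.mp (hK.of_isClosed_subset hcl ?_)
  intro A hA i _ j _
  have := entry_norm_bound_of_unitary (𝕜 := ℝ) hA i j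
  rw [Real.norm_eq_abs, abs_le] at this
  exact this

lemma OG.mul_transpose {n : ℕ} (g : OG n) :
    (g : Matrix (Fin n) (Fin n) ℝ) * (g : Matrix (Fin n) (Fin n) ℝ)ᵀ = 1 :=
  (Matrix.mem_orthogonalGroup_iff _ _).1 g.2

lemma OG.transpose_mul {n : ℕ} (g : OG n) :
    (g : Matrix (Fin n) (Fin n) ℝ)ᵀ * (g : Matrix (Fin n) (Fin n) ℝ) = 1 :=
  mul_eq_one_comm.1 (OG.mul_transpose g)

lemma integrable_of_continuous {X : Type*} [TopologicalSpace X] [CompactSpace X]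
    [MeasurableSpace X] [BorelSpace X] (μ : Measure X) [IsFiniteMeasure μ]
    {f : X → ℝ} (hf : Continuous f) : Integrable f μ :=
  hf.integrable_of_hasCompactSupport (HasCompactSupport.of_compactSpace f)

lemma integral_mul_left {n : ℕ} (μ : Measure (OG n))
    (hμ : ∀ g : OG n, μ.map (fun x => g * x) = μ) {f : OG n → ℝ} (hf : Continuous f)
    (g : OG n) : ∫ x, f (g * x) ∂μ = ∫ x, f x ∂μ := by
  conv_rhs => rw [← hμ g]
  rw [integral_map (by fun_prop) hf.aestronglyMeasurable]

/-- A left-invariant probability measure on the compact group `O(n)` is invariant under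
inversion: integrate `f (y⁻¹ x)` over both variables in the two possible orders. -/
lemma integral_inv {n : ℕ} (μ : Measure (OG n)) [IsProbabilityMeasure μ]
    (hμ : ∀ g : OG n, μ.map (fun x => g * x) = μ) {f : OG n → ℝ} (hf : Continuous f) :
    ∫ x, f x⁻¹ ∂μ = ∫ x, f x ∂μ := by
  have h1 : ∫ y, ∫ x, f (y⁻¹ * x) ∂μ ∂μ = ∫ x, f x ∂μ := by
    simp [integral_mul_left μ hμ hf]
  have h2 : ∀ x, ∫ y, f (y⁻¹ * x) ∂μ = ∫ y, f y⁻¹ ∂μ := fun x => by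
    have := integral_mul_left μ hμ (f := fun y => f (y⁻¹ * x)) (by fun_prop) x
    rw [← this]
    simp
  rw [← h1, integral_integral_swap]
  · simp [h2]
  · exact integrable_of_continuous _ (by fun_prop)

lemma integral_mul_right {n : ℕ} (μ : Measure (OG n)) [IsProbabilityMeasure μ]
    (hμ : ∀ g : OG n, μ.map (fun x => g * x) = μ) {f : OG n → ℝ} (hf : Continuous f)
    (g : OG n) : ∫ x, f (x * g) ∂μ = ∫ x, f x ∂μ := by
  rw [← integral_inv μ hμ hf, ← integral_inv μ hμ (f := fun x => f (x * g)) (by fun_prop),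
    ← integral_mul_left μ hμ (f := fun x => f x⁻¹) (by fun_prop) g⁻¹]
  simp

/-! ### Gaussian moments and the Wick recursion -/

open ProbabilityTheory in
/-- The `N`-th moment of the standard real Gaussian law. -/
noncomputable def gmom (N : ℕ) : ℝ := ∫ x : ℝ, x ^ N ∂(gaussianReal 0 1)

open ProbabilityTheory in
lemma integrable_pow_gaussian (N : ℕ) : Integrable (fun x : ℝ => x ^ N) (gaussianReal 0 1) := by
  rcases Nat.eq_zero_or_pos N with rfl | hN
  · simp
  have h := (memLp_id_gaussianReal (μ := 0) (v := 1) (N : NNReal)).integrable_norm_pow hN.ne'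
  refine (integrable_norm_iff (by fun_prop)).1 (h.congr (ae_of_all _ fun x => ?_))
  simp

open ProbabilityTheory in
lemma integrable_pdf_mul_pow (N : ℕ) :
    Integrable (fun x : ℝ => gaussianPDFReal 0 1 x * x ^ N) := by
  have h := integrable_pow_gaussian N
  rw [gaussianReal_of_var_ne_zero _ one_ne_zero] at h
  rw [integrable_withDensity_iff (by fun_prop) (ae_of_all _ fun x => by simp [gaussianPDF])] at h
  refine h.congr (ae_of_all _ fun x => ?_)
  simp [gaussianPDF, gaussianPDFReal_nonneg, mul_comm]

open ProbabilityTheory in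
lemma hasDerivAt_gaussianPDFReal (x : ℝ) :
    HasDerivAt (gaussianPDFReal 0 1) (-x * gaussianPDFReal 0 1 x) x := by
  have h : HasDerivAt (fun x : ℝ => -(x - 0) ^ 2 / (2 * ((1 : NNReal) : ℝ))) (-x) x := by
    have := (((hasDerivAt_id x).sub_const 0).pow 2).neg.div_const (2 * ((1 : NNReal) : ℝ))
    convert! this using 1
    simp only [id, sub_zero, NNReal.coe_one]
    norm_num
    ring
  have h2 := (h.exp).const_mul ((√(2 * Real.pi * ((1 : NNReal) : ℝ)))⁻¹)
  rw [gaussianPDFReal_def]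
  convert! h2 using 1
  ring

open ProbabilityTheory in
/-- Gaussian integration by parts; for `N = 0` the right-hand side vanishes whatever the value
of the truncated subtraction. -/
lemma gmom_succ (N : ℕ) : gmom (N + 1) = N * gmom (N - 1) := by
  have key : ∫ x : ℝ, (N * (gaussianPDFReal 0 1 x * x ^ (N - 1))
      - gaussianPDFReal 0 1 x * x ^ (N + 1)) = 0 := by
    refine integral_eq_zero_of_hasDerivAt_of_integrable
      (f := fun x => gaussianPDFReal 0 1 x * x ^ N) (fun x => ?_) ?_ (integrable_pdf_mul_pow N)
    · convert! (hasDerivAt_gaussianPDFReal x).mul (hasDerivAt_pow N x) using 1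
      ring
    · exact ((integrable_pdf_mul_pow _).const_mul _).sub (integrable_pdf_mul_pow _)
  rw [integral_sub ((integrable_pdf_mul_pow _).const_mul _) (integrable_pdf_mul_pow _),
    integral_const_mul] at key
  unfold gmom
  simp only [integral_gaussianReal_eq_integral_smul one_ne_zero, smul_eq_mul]
  linarith

open ProbabilityTheory in
/-- The law of a family of independent standard Gaussian variables. -/
noncomputable def gaussPi (κ : Type*) [Fintype κ] : Measure (κ → ℝ) :=
  Measure.pi fun _ => gaussianReal 0 1

open ProbabilityTheory in
instance gaussPi.isProbabilityMeasure (κ : Type*) [Fintype κ] :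
    IsProbabilityMeasure (gaussPi κ) := by unfold gaussPi; infer_instance

open ProbabilityTheory in
instance gaussPi.isOpenPosMeasure (κ : Type*) [Fintype κ] :
    (gaussPi κ).IsOpenPosMeasure := by
  have : (gaussianReal 0 1).IsOpenPosMeasure :=
    (gaussianReal_absolutelyContinuous' 0 one_ne_zero).isOpenPosMeasure
  unfold gaussPi
  infer_instance

lemma prod_eq_prod_pow {ι κ : Type*} [Fintype κ] [DecidableEq κ]
    (S : Finset ι) (c : ι → κ) (x : κ → ℝ) :
    ∏ s ∈ S, x (c s) = ∏ j : κ, x j ^ (S.filter fun s => c s = j).card := by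
  rw [← Finset.prod_fiberwise S c (fun s => x (c s))]
  refine Finset.prod_congr rfl fun j _ => ?_
  rw [Finset.prod_congr rfl (g := fun _ => x j)
    (fun s hs => by rw [(Finset.mem_filter.1 hs).2]), Finset.prod_const]

lemma integrable_prod_gaussPi {ι κ : Type*} [Fintype κ] [DecidableEq κ]
    (S : Finset ι) (c : ι → κ) :
    Integrable (fun x : κ → ℝ => ∏ s ∈ S, x (c s)) (gaussPi κ) := by
  simp only [prod_eq_prod_pow]
  exact Integrable.fintype_prod (f := fun j (y : ℝ) => y ^ (S.filter fun s => c s = j).card)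
    fun j => integrable_pow_gaussian _

lemma integral_prod_gaussPi {ι κ : Type*} [Fintype κ] [DecidableEq κ]
    (S : Finset ι) (c : ι → κ) :
    ∫ x : κ → ℝ, ∏ s ∈ S, x (c s) ∂(gaussPi κ)
      = ∏ j : κ, gmom (S.filter fun s => c s = j).card := by
  simp only [prod_eq_prod_pow]
  exact integral_fintype_prod_eq_prod (fun j (y : ℝ) => y ^ (S.filter fun s => c s = j).card)

/-- Wick recursion: expand along the partner `t` of a chosen factor `s₀`. -/
lemma wick_step {ι κ : Type*} [DecidableEq ι] [Fintype κ] [DecidableEq κ]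
    (S : Finset ι) (s₀ : ι) (hs : s₀ ∉ S) (c : ι → κ) :
    ∫ x : κ → ℝ, ∏ s ∈ insert s₀ S, x (c s) ∂(gaussPi κ)
      = ∑ t ∈ S, (if c s₀ = c t then 1 else 0)
          * ∫ x : κ → ℝ, ∏ s ∈ S.erase t, x (c s) ∂(gaussPi κ) := by
  simp only [integral_prod_gaussPi]
  have hsplit : ∀ g : κ → ℝ, ∏ j, g j = g (c s₀) * ∏ j ∈ univ.erase (c s₀), g j := fun g =>
    (Finset.mul_prod_erase _ _ (mem_univ _)).symm
  have hR : ∀ t ∈ S, ((if c s₀ = c t then 1 else 0)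
      * ∏ j, gmom ((S.erase t).filter fun s => c s = j).card : ℝ)
      = (if c t = c s₀ then 1 else 0) * (gmom ((S.filter fun s => c s = c s₀).card - 1)
        * ∏ j ∈ univ.erase (c s₀), gmom (S.filter fun s => c s = j).card) := by
    intro t ht
    by_cases h : c t = c s₀
    · rw [if_pos h, if_pos h.symm, one_mul, one_mul, hsplit]
      congr 1
      · congr 1
        rw [Finset.filter_erase, Finset.card_erase_of_mem (by simp [ht, h])]
      · refine Finset.prod_congr rfl fun j hj => ?_
        rw [Finset.filter_erase, Finset.erase_eq_of_notMem]
        intro hm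
        exact (Finset.mem_erase.1 hj).1 ((Finset.mem_filter.1 hm).2.symm.trans h)
    · rw [if_neg h, if_neg (fun h' => h h'.symm)]; simp
  rw [Finset.sum_congr rfl hR, ← Finset.sum_mul, Finset.sum_boole, hsplit]
  have h1 : ((insert s₀ S).filter fun s => c s = c s₀).card
      = (S.filter fun s => c s = c s₀).card + 1 := by
    rw [Finset.filter_insert, if_pos rfl, Finset.card_insert_of_notMem (by simp [hs])]
  have h2 : ∏ j ∈ univ.erase (c s₀), gmom ((insert s₀ S).filter fun s => c s = j).card
      = ∏ j ∈ univ.erase (c s₀), gmom (S.filter fun s => c s = j).card := by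
    refine Finset.prod_congr rfl fun j hj => ?_
    rw [Finset.filter_insert, if_neg (fun h => (Finset.mem_erase.1 hj).1 h.symm)]
  rw [h1, h2, gmom_succ, mul_assoc]

/-! ### Splitting `{1, …, 2k}` into pairs -/

lemma lo_injective {k : ℕ} : Function.Injective (lo : Fin k → Fin (2 * k)) := by
  intro r s h
  simp only [lo, Fin.mk.injEq] at h
  exact Fin.ext (by omega)

lemma hi_injective {k : ℕ} : Function.Injective (hi : Fin k → Fin (2 * k)) := by
  intro r s h
  simp only [hi, Fin.mk.injEq] at h
  exact Fin.ext (by omega)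

lemma lo_ne_hi {k : ℕ} (r s : Fin k) : lo r ≠ hi s := by
  intro h
  simp only [lo, hi, Fin.mk.injEq] at h
  omega

lemma lo_or_hi {k : ℕ} (x : Fin (2 * k)) : (∃ r, x = lo r) ∨ ∃ r, x = hi r := by
  have hx := x.isLt
  rcases Nat.even_or_odd' (x : ℕ) with ⟨c, hc | hc⟩
  · exact Or.inl ⟨⟨c, by omega⟩, Fin.ext hc⟩
  · exact Or.inr ⟨⟨c, by omega⟩, Fin.ext hc⟩

/-- The bijection from two copies of `{1, …, k}` given by `lo` and `hi`. -/
noncomputable def pairEquiv (k : ℕ) : Fin k ⊕ Fin k ≃ Fin (2 * k) :=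
  Equiv.ofBijective (Sum.elim lo hi) (by
    refine ⟨lo_injective.sumElim hi_injective lo_ne_hi, fun x => ?_⟩
    rcases lo_or_hi x with ⟨r, rfl⟩ | ⟨r, rfl⟩
    · exact ⟨Sum.inl r, rfl⟩
    · exact ⟨Sum.inr r, rfl⟩)

@[simp] lemma pairEquiv_inl {k : ℕ} (r : Fin k) : pairEquiv k (Sum.inl r) = lo r := rfl

@[simp] lemma pairEquiv_inr {k : ℕ} (r : Fin k) : pairEquiv k (Sum.inr r) = hi r := rfl

lemma prod_pairs {k : ℕ} {R : Type*} [CommMonoid R] (f : Fin (2 * k) → R) :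
    ∏ s, f s = ∏ r : Fin k, (f (lo r) * f (hi r)) := by
  rw [← Equiv.prod_comp (pairEquiv k), Fintype.prod_sum_type, Finset.prod_mul_distrib]
  rfl

lemma prod_perm_pairs {k : ℕ} {R : Type*} [CommMonoid R] (σ : Equiv.Perm (Fin (2 * k)))
    (f : Fin (2 * k) → R) :
    ∏ s, f s = ∏ r : Fin k, (f (σ (lo r)) * f (σ (hi r))) := by
  rw [← Equiv.prod_comp σ, prod_pairs]

/-- A sequence of length `2k`, read along `σ`, is a sequence of `k` pairs. -/
noncomputable def seqEquiv {k : ℕ} (σ : Equiv.Perm (Fin (2 * k))) (α : Type*) :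
    (Fin (2 * k) → α) ≃ (Fin k → α × α) :=
  ((Equiv.arrowCongr ((pairEquiv k).trans σ).symm (Equiv.refl α)).trans
    (Equiv.sumArrowEquivProdArrow _ _ _)).trans (Equiv.arrowProdEquivProdArrow _ _ _).symm

lemma seqEquiv_apply {k : ℕ} (σ : Equiv.Perm (Fin (2 * k))) {α : Type*}
    (j : Fin (2 * k) → α) (r : Fin k) :
    seqEquiv σ α j r = (j (σ (lo r)), j (σ (hi r))) := rfl

lemma sum_prod_pairs {k : ℕ} (σ : Equiv.Perm (Fin (2 * k))) {α : Type*} [Fintype α]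
    (f : Fin k → α → α → ℝ) :
    ∑ j : Fin (2 * k) → α, ∏ r, f r (j (σ (lo r))) (j (σ (hi r))) = ∏ r, ∑ p, ∑ q, f r p q := by
  have h1 : ∀ r, ∑ p, ∑ q, f r p q = ∑ x : α × α, f r x.1 x.2 := fun r =>
    (Fintype.sum_prod_type' (f r)).symm
  simp only [h1, Finset.prod_univ_sum, Fintype.piFinset_univ]
  rw [← Equiv.sum_comp (seqEquiv σ α)]
  rfl

/-! ### Tensor powers of matrices -/

/-- The action of the tensor power `A^{⊗ m}` on tensors of order `m`, in coordinates. -/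
def tact {m n : ℕ} (A : Matrix (Fin n) (Fin n) ℝ) (v : (Fin m → Fin n) → ℝ) :
    (Fin m → Fin n) → ℝ :=
  fun i => ∑ j, (∏ s, A (i s) (j s)) * v j

lemma tact_mul {m n : ℕ} (A B : Matrix (Fin n) (Fin n) ℝ) (v : (Fin m → Fin n) → ℝ) :
    tact (A * B) v = tact A (tact B v) := by
  funext i
  simp only [tact, Matrix.mul_apply, Finset.prod_univ_sum, Fintype.piFinset_univ,
    Finset.sum_mul, Finset.mul_sum, Finset.prod_mul_distrib]
  rw [Finset.sum_comm]
  simp only [mul_assoc]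

lemma tact_one {m n : ℕ} (v : (Fin m → Fin n) → ℝ) : tact 1 v = v := by
  funext i
  rw [tact, Finset.sum_eq_single i]
  · simp
  · intro j _ hj
    obtain ⟨s, hs⟩ := Function.ne_iff.1 hj
    rw [Finset.prod_eq_zero (mem_univ s) (by rw [Matrix.one_apply_ne hs.symm]), zero_mul]
  · simp

lemma tact_adjoint {m n : ℕ} (A : Matrix (Fin n) (Fin n) ℝ) (v w : (Fin m → Fin n) → ℝ) :
    ∑ i, tact A v i * w i = ∑ i, v i * tact Aᵀ w i := by
  simp only [tact, Finset.sum_mul, Finset.mul_sum, Matrix.transpose_apply]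
  rw [Finset.sum_comm]
  exact Finset.sum_congr rfl fun _ _ => Finset.sum_congr rfl fun _ _ => by ring

/-- The tensor `A^{⊗ k}` of order `2k` attached to a matrix `A`. -/
def tens {k n : ℕ} (A : Matrix (Fin n) (Fin n) ℝ) (i : Fin (2 * k) → Fin n) : ℝ :=
  ∏ r : Fin k, A (i (lo r)) (i (hi r))

lemma tact_pairs {k n : ℕ} (σ : Equiv.Perm (Fin (2 * k))) (A B : Matrix (Fin n) (Fin n) ℝ)
    (i : Fin (2 * k) → Fin n) :
    tact A (fun j => ∏ r, B (j (σ (lo r))) (j (σ (hi r)))) i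
      = ∏ r, (A * B * Aᵀ) (i (σ (lo r))) (i (σ (hi r))) := by
  have h : ∀ r, (A * B * Aᵀ) (i (σ (lo r))) (i (σ (hi r)))
      = ∑ p, ∑ q, A (i (σ (lo r))) p * A (i (σ (hi r))) q * B p q := by
    intro r
    simp only [Matrix.mul_apply, Matrix.transpose_apply, Finset.sum_mul]
    rw [Finset.sum_comm]
    exact Finset.sum_congr rfl fun _ _ => Finset.sum_congr rfl fun _ _ => by ring
  simp only [h]
  rw [← sum_prod_pairs σ, tact]
  refine Finset.sum_congr rfl fun j _ => ?_
  rw [prod_perm_pairs σ, ← Finset.prod_mul_distrib]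

lemma tact_tens {k n : ℕ} (A B : Matrix (Fin n) (Fin n) ℝ) :
    tact A (tens (k := k) B) = tens (A * B * Aᵀ) := by
  funext i
  exact tact_pairs 1 A B i

lemma tact_DeltaO {k n : ℕ} (σ : Equiv.Perm (Fin (2 * k))) (A : Matrix (Fin n) (Fin n) ℝ)
    (hA : A * Aᵀ = 1) : tact A (DeltaO σ) = DeltaO σ := by
  funext i
  have := tact_pairs σ A 1 i
  simp only [mul_one, hA, Matrix.one_apply] at this
  exact this

/-! ### Polar decomposition and positivity -/

open scoped MatrixOrder in
/-- Polar decomposition of an invertible real matrix, the positive factor written as `Cᵀ C`. -/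
lemma exists_polar {n : ℕ} (G : Matrix (Fin n) (Fin n) ℝ) (hG : G.det ≠ 0) :
    ∃ R C : Matrix (Fin n) (Fin n) ℝ, R * Rᵀ = 1 ∧ G = R * (Cᵀ * C) := by
  have hS : (Gᵀ * G).PosSemidef := by
    simpa using Matrix.posSemidef_conjTranspose_mul_self G
  set B := CFC.sqrt (Gᵀ * G) with hB
  have hBB : B * B = Gᵀ * G := CFC.sqrt_mul_sqrt_self _ hS.nonneg
  have hBp : B.PosSemidef := Matrix.nonneg_iff_posSemidef.1 (CFC.sqrt_nonneg _)
  obtain ⟨C, hC⟩ := CStarAlgebra.nonneg_iff_eq_star_mul_self.1 hBp.nonneg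
  have hC' : B = Cᵀ * C := by simpa [Matrix.star_eq_conjTranspose] using hC
  have hBT : Bᵀ = B := by rw [hC']; simp
  have hdet : IsUnit B.det := by
    have := congrArg Matrix.det hBB
    rw [Matrix.det_mul, Matrix.det_mul, Matrix.det_transpose] at this
    refine isUnit_iff_ne_zero.2 fun h => hG ?_
    rw [h, zero_mul] at this
    exact mul_self_eq_zero.1 this.symm
  refine ⟨G * B⁻¹, C, ?_, ?_⟩
  · rw [mul_eq_one_comm, Matrix.transpose_mul, Matrix.transpose_nonsing_inv, hBT]
    calc B⁻¹ * Gᵀ * (G * B⁻¹) = B⁻¹ * (Gᵀ * G) * B⁻¹ := by simp only [mul_assoc]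
      _ = (B⁻¹ * B) * (B * B⁻¹) := by rw [← hBB]; simp only [mul_assoc]
      _ = 1 := by rw [Matrix.nonsing_inv_mul _ hdet, Matrix.mul_nonsing_inv _ hdet, one_mul]
  · rw [← hC', mul_assoc, Matrix.nonsing_inv_mul _ hdet, mul_one]

/-- The diagonal matrix coefficient `G ↦ ⟨v, G^{⊗ m} v⟩`. -/
def tquad {m n : ℕ} (v : (Fin m → Fin n) → ℝ) (G : Matrix (Fin n) (Fin n) ℝ) : ℝ :=
  ∑ i, v i * tact G v i

lemma tquad_continuous {m n : ℕ} (v : (Fin m → Fin n) → ℝ) : Continuous (tquad v) := by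
  unfold tquad tact
  fun_prop

/-- With `G = R Cᵀ C` and `v` invariant under `R`, one has
`⟨v, G^{⊗ m} v⟩ = ‖C^{⊗ m} v‖²`. -/
lemma tquad_nonneg_of_det {m n : ℕ} (v : (Fin m → Fin n) → ℝ)
    (hv : ∀ A : Matrix (Fin n) (Fin n) ℝ, A * Aᵀ = 1 → tact A v = v)
    (G : Matrix (Fin n) (Fin n) ℝ) (hG : G.det ≠ 0) : 0 ≤ tquad v G := by
  obtain ⟨R, C, hR, rfl⟩ := exists_polar G hG
  have h1 : tact Rᵀ v = v := hv _ (by rw [Matrix.transpose_transpose]; exact mul_eq_one_comm.1 hR)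
  have h2 : tquad v (R * (Cᵀ * C)) = ∑ i, tact C v i * tact C v i := by
    unfold tquad
    rw [tact_mul, ← Matrix.transpose_transpose R, ← tact_adjoint, h1, tact_mul, ← tact_adjoint]
  rw [h2]
  exact Finset.sum_nonneg fun i _ => mul_self_nonneg _

/-- Positivity extends to singular `G` by continuity, as `t + G` is invertible for all but
finitely many `t`. -/
lemma tquad_nonneg {m n : ℕ} (v : (Fin m → Fin n) → ℝ)
    (hv : ∀ A : Matrix (Fin n) (Fin n) ℝ, A * Aᵀ = 1 → tact A v = v)
    (G : Matrix (Fin n) (Fin n) ℝ) : 0 ≤ tquad v G := by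
  have hfin : {t : ℝ | (-G).charpoly.eval t = 0}.Finite :=
    Polynomial.finite_setOfPred_isRoot (Matrix.charpoly_monic (-G)).ne_zero
  have hcl : IsClosed {t : ℝ | 0 ≤ tquad v (Matrix.scalar (Fin n) t + G)} := by
    refine isClosed_le continuous_const ((tquad_continuous v).comp ?_)
    simp only [Matrix.scalar_apply]
    fun_prop
  have hsub : {t : ℝ | (-G).charpoly.eval t = 0}ᶜ
      ⊆ {t : ℝ | 0 ≤ tquad v (Matrix.scalar (Fin n) t + G)} := by
    intro t ht
    refine tquad_nonneg_of_det v hv _ ?_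
    simpa [Matrix.eval_charpoly] using ht
  have h := (hcl.closure_subset_iff.2 hsub) ((hfin.countable.dense_compl ℝ) 0)
  simpa using h

/-! ### Invariant tensors orthogonal to all pairings vanish -/

/-- The product of Kronecker deltas of `c` along a list of pairs. -/
def pairFun {ι κ : Type*} [DecidableEq κ] (L : List (ι × ι)) (c : ι → κ) : ℝ :=
  (L.map fun p => if c p.1 = c p.2 then (1 : ℝ) else 0).prod

/-- A list of `k` pairs covering `2k` points is enumerated by a permutation. -/
lemma exists_perm_of_list {k : ℕ} (L : List (Fin (2 * k) × Fin (2 * k))) (hL : L.length = k)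
    (hcov : ∀ x, ∃ p ∈ L, x = p.1 ∨ x = p.2) :
    ∃ σ : Equiv.Perm (Fin (2 * k)), ∀ {κ : Type} [DecidableEq κ] (c : Fin (2 * k) → κ),
      pairFun L c = DeltaO σ c := by
  obtain ⟨g, rfl⟩ : ∃ g : Fin k → Fin (2 * k) × Fin (2 * k), L = List.ofFn g :=
    ⟨fun r => L.get (Fin.cast hL.symm r), by
      refine List.ext_get (by simp [hL]) fun m h1 h2 => by simp⟩
  let f : Fin k ⊕ Fin k → Fin (2 * k) := Sum.elim (fun r => (g r).1) (fun r => (g r).2)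
  have hsurj : Function.Surjective f := by
    intro x
    obtain ⟨p, hp, hx⟩ := hcov x
    obtain ⟨r, rfl⟩ := (List.mem_ofFn' _ _).1 hp
    rcases hx with rfl | rfl
    · exact ⟨Sum.inl r, rfl⟩
    · exact ⟨Sum.inr r, rfl⟩
  have hbij : Function.Bijective f :=
    (Fintype.bijective_iff_surjective_and_card f).2 ⟨hsurj, by simp; omega⟩
  refine ⟨(pairEquiv k).symm.trans (Equiv.ofBijective f hbij), fun {κ} _ c => ?_⟩
  have h1 : ∀ r, ((pairEquiv k).symm.trans (Equiv.ofBijective f hbij)) (lo r) = (g r).1 :=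
    fun r => congrArg f ((pairEquiv k).symm_apply_apply (Sum.inl r))
  have h2 : ∀ r, ((pairEquiv k).symm.trans (Equiv.ofBijective f hbij)) (hi r) = (g r).2 :=
    fun r => congrArg f ((pairEquiv k).symm_apply_apply (Sum.inr r))
  simp only [DeltaO, h1, h2, pairFun, List.map_ofFn, List.prod_ofFn, Function.comp]

/-- Wick's theorem in the form needed: a linear functional `∑ c, w c * ·` that kills all
complete pairings kills the Gaussian moments. The list `L` records the pairs already formed and
`S` the points still to be paired. -/
lemma wick_kill {k : ℕ} {κ : Type} [Fintype κ] [DecidableEq κ]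
    (w : (Fin (2 * k) → κ) → ℝ)
    (hw : ∀ σ : Equiv.Perm (Fin (2 * k)), ∑ c, w c * DeltaO σ c = 0) :
    ∀ (N : ℕ) (S : Finset (Fin (2 * k))) (L : List (Fin (2 * k) × Fin (2 * k))),
      S.card = N → 2 * L.length + S.card = 2 * k →
      (∀ x ∉ S, ∃ p ∈ L, x = p.1 ∨ x = p.2) →
      ∑ c, w c * (pairFun L c * ∫ x : κ → ℝ, ∏ s ∈ S, x (c s) ∂(gaussPi κ)) = 0 := by
  intro N
  induction N using Nat.strong_induction_on with
  | _ N ih =>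
    intro S L hN hcard hcov
    rcases S.eq_empty_or_nonempty with rfl | ⟨s₀, hs₀⟩
    · obtain ⟨σ, hσ⟩ := exists_perm_of_list L (by simpa using hcard)
        (fun x => hcov x (by simp))
      refine Eq.trans ?_ (hw σ)
      simp [hσ]
    · obtain ⟨S', hs', rfl⟩ : ∃ S', s₀ ∉ S' ∧ insert s₀ S' = S :=
        ⟨S.erase s₀, by simp, Finset.insert_erase hs₀⟩
      rw [Finset.card_insert_of_notMem hs'] at hN hcard
      simp only [wick_step S' s₀ hs', Finset.mul_sum]
      rw [Finset.sum_comm]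
      refine Finset.sum_eq_zero fun t ht => ?_
      have hpos : 0 < S'.card := Finset.card_pos.2 ⟨t, ht⟩
      have hc : (S'.erase t).card = S'.card - 1 := Finset.card_erase_of_mem ht
      have := ih (S'.erase t).card (by omega) (S'.erase t) ((s₀, t) :: L) rfl
        (by simp only [List.length_cons]; omega) (by
          intro x hx
          by_cases h1 : x = s₀
          · exact ⟨(s₀, t), by simp, Or.inl h1⟩
          by_cases h2 : x = t
          · exact ⟨(s₀, t), by simp, Or.inr h2⟩
          obtain ⟨p, hp, hxp⟩ := hcov x (by simp_all)
          exact ⟨p, List.mem_cons_of_mem _ hp, hxp⟩)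
      refine Eq.trans ?_ this
      refine Finset.sum_congr rfl fun c _ => ?_
      simp only [pairFun, List.map_cons, List.prod_cons]
      ring

lemma DeltaO_prod {k : ℕ} {α β : Type} [DecidableEq α] [DecidableEq β]
    (σ : Equiv.Perm (Fin (2 * k))) (c : Fin (2 * k) → α × β) :
    (DeltaO σ c : ℝ) = DeltaO σ (fun s => (c s).1) * DeltaO σ (fun s => (c s).2) := by
  simp only [DeltaO, ← Finset.prod_mul_distrib]
  refine Finset.prod_congr rfl fun r _ => ?_
  simp only [Prod.ext_iff, ite_and]
  split_ifs <;> simp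

/-- First fundamental theorem of invariant theory for `O(n)`, dual form: an invariant tensor
orthogonal to all pairing tensors `Δ_σ` is zero. For a Gaussian matrix `G`, the nonnegative quantity
`⟨v, G^{⊗ 2k} v⟩` has expectation a combination of `⟨v, Δ_σ⟩² = 0`, hence it vanishes identically;
at `G = 1` it is `‖v‖²`. -/
theorem eq_zero_of_invariant {k n : ℕ} (v : (Fin (2 * k) → Fin n) → ℝ)
    (hv : ∀ A : Matrix (Fin n) (Fin n) ℝ, A * Aᵀ = 1 → tact A v = v)
    (hΔ : ∀ σ : Equiv.Perm (Fin (2 * k)), ∑ i, v i * DeltaO σ i = 0) : v = 0 := by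
  let M : (Fin n × Fin n → ℝ) → Matrix (Fin n) (Fin n) ℝ := fun x => Matrix.of fun p q => x (p, q)
  have hM : Continuous M := by
    refine continuous_matrix fun p q => ?_
    simp only [M, Matrix.of_apply]
    fun_prop
  let w : (Fin (2 * k) → Fin n × Fin n) → ℝ :=
    fun c => v (fun s => (c s).1) * v (fun s => (c s).2)
  have hsum : ∀ f : (Fin (2 * k) → Fin n) → (Fin (2 * k) → Fin n) → ℝ,
      ∑ c : Fin (2 * k) → Fin n × Fin n, f (fun s => (c s).1) (fun s => (c s).2)
        = ∑ i, ∑ j, f i j := by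
    intro f
    rw [← Fintype.sum_prod_type' f, ← Equiv.sum_comp (Equiv.arrowProdEquivProdArrow _ _ _)]
    rfl
  have hw : ∀ σ : Equiv.Perm (Fin (2 * k)), ∑ c, w c * DeltaO σ c = 0 := by
    intro σ
    simp only [w, DeltaO_prod]
    rw [hsum fun i j => v i * v j * (DeltaO σ i * DeltaO σ j)]
    calc _ = (∑ i, v i * DeltaO σ i) * ∑ j, v j * DeltaO σ j := by
            rw [Finset.sum_mul_sum]
            exact Finset.sum_congr rfl fun _ _ => Finset.sum_congr rfl fun _ _ => by ring
      _ = 0 := by rw [hΔ, zero_mul]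
  have hexp : ∀ x, tquad v (M x) = ∑ c, w c * ∏ s, x (c s) := by
    intro x
    have := hsum fun i j => v i * v j * ∏ s, x (i s, j s)
    simp only [w]
    rw [tquad]
    refine Eq.trans ?_ this.symm
    simp only [tact, Finset.mul_sum, M, Matrix.of_apply]
    exact Finset.sum_congr rfl fun _ _ => Finset.sum_congr rfl fun _ _ => by ring
  have hmono_int : ∀ c : Fin (2 * k) → Fin n × Fin n,
      Integrable (fun x : Fin n × Fin n → ℝ => w c * ∏ s, x (c s)) (gaussPi (Fin n × Fin n)) :=
    fun c => (integrable_prod_gaussPi univ c).const_mul _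
  have hzero : ∫ x, tquad v (M x) ∂(gaussPi (Fin n × Fin n)) = 0 := by
    simp only [hexp]
    rw [integral_finsetSum _ fun c _ => hmono_int c]
    simp only [integral_const_mul]
    have := wick_kill w hw (2 * k) univ [] (by simp) (by simp) (by simp)
    simpa [pairFun] using this
  have hI : Integrable (fun x => tquad v (M x)) (gaussPi (Fin n × Fin n)) := by
    simp only [hexp]
    exact integrable_finsetSum _ fun c _ => hmono_int c
  have hae := (integral_eq_zero_iff_of_nonneg (fun x => tquad_nonneg v hv (M x)) hI).1 hzero
  -- The Gaussian law charges every nonempty open set.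
  have hall := Measure.eq_of_ae_eq hae ((tquad_continuous v).comp hM) continuous_zero
  have h1 : tquad v 1 = 0 := by
    have := congrFun hall fun pq => (1 : Matrix (Fin n) (Fin n) ℝ) pq.1 pq.2
    exact this
  rw [tquad, tact_one, Finset.sum_eq_zero_iff_of_nonneg fun i _ => mul_self_nonneg _] at h1
  funext i
  exact mul_self_eq_zero.1 (h1 i (mem_univ i))

/-! ### Sums of pairing tensors over the graph `Γ(ρ)` -/

lemma mk_lo_eq_mk_hi {k : ℕ} (ρ : Equiv.Perm (Fin (2 * k))) (r : Fin k) :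
    (Gamma ρ).connectedComponentMk (lo r) = (Gamma ρ).connectedComponentMk (hi r) := by
  refine SimpleGraph.ConnectedComponent.sound (SimpleGraph.Adj.reachable ?_)
  rw [Gamma, SimpleGraph.fromRel_adj]
  exact ⟨lo_ne_hi r r, Or.inl (Or.inl ⟨r, rfl, rfl⟩)⟩

lemma mk_perm_lo_eq_mk_perm_hi {k : ℕ} (ρ : Equiv.Perm (Fin (2 * k))) (r : Fin k) :
    (Gamma ρ).connectedComponentMk (ρ (lo r)) = (Gamma ρ).connectedComponentMk (ρ (hi r)) := by
  refine SimpleGraph.ConnectedComponent.sound (SimpleGraph.Adj.reachable ?_)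
  rw [Gamma, SimpleGraph.fromRel_adj]
  exact ⟨fun h => lo_ne_hi r r (ρ.injective h), Or.inl (Or.inr ⟨r, rfl, rfl⟩)⟩

lemma DeltaO_eq_zero_or {k : ℕ} {α : Type*} [DecidableEq α] (σ : Equiv.Perm (Fin (2 * k)))
    (j : Fin (2 * k) → α) :
    (DeltaO σ j : ℝ) = 0 ∨ ∀ r, j (σ (lo r)) = j (σ (hi r)) := by
  by_cases h : ∀ r, j (σ (lo r)) = j (σ (hi r))
  · exact Or.inr h
  · push Not at h
    obtain ⟨r, hr⟩ := h
    exact Or.inl (Finset.prod_eq_zero (mem_univ r) (if_neg hr))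

lemma DeltaO_eq_one {k : ℕ} {α : Type*} [DecidableEq α] (σ : Equiv.Perm (Fin (2 * k)))
    (j : Fin (2 * k) → α) (h : ∀ r, j (σ (lo r)) = j (σ (hi r))) : (DeltaO σ j : ℝ) = 1 :=
  Finset.prod_eq_one fun r _ => if_pos (h r)

/-- The sequences compatible with both pairings are the functions on the components of `Γ(ρ)`,
so a sum over them factorizes over the components. -/
lemma sum_Delta_Delta {k : ℕ} {α : Type*} [Fintype α] [DecidableEq α]
    (ρ : Equiv.Perm (Fin (2 * k)))
    [Fintype (Gamma ρ).ConnectedComponent] [DecidableEq (Gamma ρ).ConnectedComponent]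
    (w : α → ℝ) :
    ∑ j : Fin (2 * k) → α, DeltaO 1 j * DeltaO ρ j * ∏ r, w (j (lo r))
      = ∏ C : (Gamma ρ).ConnectedComponent,
          ∑ p, w p ^ (univ.filter fun r => (Gamma ρ).connectedComponentMk (lo r) = C).card := by
  simp only [Finset.prod_univ_sum, Fintype.piFinset_univ]
  symm
  refine Finset.sum_of_injOn
    (fun (f : (Gamma ρ).ConnectedComponent → α) x => f ((Gamma ρ).connectedComponentMk x))
    ?_ (fun _ _ => Finset.mem_coe.2 (mem_univ _)) ?_ ?_
  · intro f _ g _ h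
    funext C
    induction C using SimpleGraph.ConnectedComponent.ind with
    | _ x => exact congrFun h x
  · intro j _ hj
    rcases DeltaO_eq_zero_or 1 j with h | h1
    · rw [h]; simp
    rcases DeltaO_eq_zero_or ρ j with h | h2
    · rw [h]; simp
    refine absurd ?_ hj
    have hadj : ∀ x y, (Gamma ρ).Adj x y → j x = j y := by
      intro x y hxy
      rw [Gamma, SimpleGraph.fromRel_adj] at hxy
      rcases hxy.2 with (⟨r, rfl, rfl⟩ | ⟨r, rfl, rfl⟩) | (⟨r, rfl, rfl⟩ | ⟨r, rfl, rfl⟩)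
      · exact h1 r
      · exact h2 r
      · exact (h1 r).symm
      · exact (h2 r).symm
    refine ⟨SimpleGraph.ConnectedComponent.lift j ?_, by simp, rfl⟩
    intro x y p _
    induction p with
    | nil => rfl
    | cons hxy p ih => exact (hadj _ _ hxy).trans (ih (by simp_all))
  · intro f _
    rw [DeltaO_eq_one 1 _ fun r => congrArg f (mk_lo_eq_mk_hi ρ r),
      DeltaO_eq_one ρ _ fun r => congrArg f (mk_perm_lo_eq_mk_perm_hi ρ r), one_mul, one_mul]
    exact (prod_eq_prod_pow univ (fun r => (Gamma ρ).connectedComponentMk (lo r))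
      (fun C => w (f C))).symm

lemma compSize_eq {k : ℕ} (ρ : Equiv.Perm (Fin (2 * k)))
    [DecidableEq (Gamma ρ).ConnectedComponent] (C : (Gamma ρ).ConnectedComponent) :
    compSize C = 2 * (univ.filter fun r => (Gamma ρ).connectedComponentMk (lo r) = C).card := by
  rw [compSize, Nat.card_eq_fintype_card, Fintype.card_subtype, Finset.card_filter,
    ← Equiv.sum_comp (pairEquiv k), Fintype.sum_sum_type, Finset.card_filter]
  simp only [pairEquiv_inl, pairEquiv_inr, ← mk_lo_eq_mk_hi]
  refine Eq.trans ?_ (two_mul _).symm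
  congr!

lemma sum_Delta_one {k n : ℕ} (ρ : Equiv.Perm (Fin (2 * k))) :
    ∑ j : Fin (2 * k) → Fin n, DeltaO 1 j * DeltaO ρ j = (n : ℝ) ^ ccount ρ := by
  classical
  have := Fintype.ofFinite (Gamma ρ).ConnectedComponent
  have h := sum_Delta_Delta (α := Fin n) ρ (fun _ => 1)
  simp only [Finset.prod_const_one, mul_one, one_pow, Finset.sum_const, Finset.card_univ,
    Fintype.card_fin, nsmul_eq_mul, Finset.prod_const] at h
  rw [h, ccount, Nat.card_eq_fintype_card]

lemma sum_sign_pow (a b m : ℕ) :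
    ∑ p : Fin (a + b), (if (p : ℕ) < a then (1 : ℝ) else -1) ^ m
      = if Even m then (a : ℝ) + b else (a : ℝ) - b := by
  rw [Fin.sum_univ_add]
  split_ifs with h
  · simp [h.neg_one_pow]
  · simp [(Nat.not_even_iff_odd.1 h).neg_one_pow, sub_eq_add_neg]

lemma tens_Iab {k n a : ℕ} (j : Fin (2 * k) → Fin n) :
    tens (Iab ℝ n a) j
      = DeltaO 1 j * ∏ r : Fin k, (if (j (lo r) : ℕ) < a then (1 : ℝ) else -1) := by
  have h : (DeltaO 1 j : ℝ) = ∏ r : Fin k, if j (lo r) = j (hi r) then 1 else 0 := rfl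
  rw [tens, h, ← Finset.prod_mul_distrib]
  refine Finset.prod_congr rfl fun r _ => ?_
  simp only [Iab, Matrix.of_apply]
  split_ifs <;> simp

/-- The pairing of `(I'_{ab})^{⊗ k}` with `Δ_ρ` is `T^{BDI}_{ab}(ρ)`. -/
lemma sum_tens_Iab {k : ℕ} (a b : ℕ) (ρ : Equiv.Perm (Fin (2 * k))) :
    ∑ j : Fin (2 * k) → Fin (a + b), tens (Iab ℝ (a + b) a) j * DeltaO ρ j
      = ((a : ℝ) + b) ^ ecomp ρ * ((a : ℝ) - b) ^ ocomp ρ := by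
  classical
  have := Fintype.ofFinite (Gamma ρ).ConnectedComponent
  have h := sum_Delta_Delta ρ (fun p : Fin (a + b) => if (p : ℕ) < a then (1 : ℝ) else -1)
  have h0 : ∑ j : Fin (2 * k) → Fin (a + b), tens (Iab ℝ (a + b) a) j * DeltaO ρ j
      = ∑ j : Fin (2 * k) → Fin (a + b), DeltaO 1 j * DeltaO ρ j
        * ∏ r : Fin k, (if (j (lo r) : ℕ) < a then (1 : ℝ) else -1) :=
    Finset.sum_congr rfl fun j _ => by rw [tens_Iab]; ring
  rw [h0, h]
  simp only [sum_sign_pow]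
  rw [Finset.prod_ite, Finset.prod_const, Finset.prod_const, ecomp, ocomp,
    Nat.card_eq_fintype_card, Nat.card_eq_fintype_card, Fintype.card_subtype,
    Fintype.card_subtype]
  congr 3
  · ext C
    simp only [Finset.mem_filter, mem_univ, true_and, compSize_eq, Nat.even_iff]
    omega
  · ext C
    simp only [Finset.mem_filter, mem_univ, true_and, compSize_eq, Nat.even_iff]
    omega

/-! ### Cosets of the hyperoctahedral group -/

/-- The fixed-point-free involution exchanging the two members of each pair `{2r-1, 2r}`;
the hyperoctahedral group is its centralizer. -/
noncomputable def flip (k : ℕ) : Equiv.Perm (Fin (2 * k)) :=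
  ((pairEquiv k).symm.trans (Equiv.sumComm _ _)).trans (pairEquiv k)

@[simp] lemma flip_lo {k : ℕ} (r : Fin k) : flip k (lo r) = hi r := by
  simp only [flip, Equiv.trans_apply, ← pairEquiv_inl, Equiv.symm_apply_apply]
  rfl

@[simp] lemma flip_hi {k : ℕ} (r : Fin k) : flip k (hi r) = lo r := by
  simp only [flip, Equiv.trans_apply, ← pairEquiv_inr, Equiv.symm_apply_apply]
  rfl

lemma flip_flip {k : ℕ} (x : Fin (2 * k)) : flip k (flip k x) = x := by
  rcases lo_or_hi x with ⟨r, rfl⟩ | ⟨r, rfl⟩ <;> simp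

lemma isHyper_iff {k : ℕ} (ζ : Equiv.Perm (Fin (2 * k))) :
    IsHyper ζ ↔ ∀ x, ζ (flip k x) = flip k (ζ x) := by
  constructor
  · intro h
    have key : ∀ r, ζ (hi r) = flip k (ζ (lo r)) := by
      intro r
      obtain ⟨j, hj⟩ := h r
      have h1 : ζ (lo r) ∈ ({lo j, hi j} : Finset (Fin (2 * k))) := by rw [← hj]; simp
      have h2 : ζ (hi r) ∈ ({lo j, hi j} : Finset (Fin (2 * k))) := by rw [← hj]; simp
      have h3 : ζ (lo r) ≠ ζ (hi r) := fun h => lo_ne_hi r r (ζ.injective h)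
      simp only [Finset.mem_insert, Finset.mem_singleton] at h1 h2
      rcases h1 with h1 | h1 <;> rcases h2 with h2 | h2 <;> simp_all
    intro x
    rcases lo_or_hi x with ⟨r, rfl⟩ | ⟨r, rfl⟩
    · simp [key]
    · simp [key, flip_flip]
  · intro h r
    have h1 := h (lo r)
    rw [flip_lo] at h1
    rw [h1]
    rcases lo_or_hi (ζ (lo r)) with ⟨j, hj⟩ | ⟨j, hj⟩
    · exact ⟨j, by rw [hj]; simp⟩
    · exact ⟨j, by rw [hj, flip_hi, Finset.pair_comm]⟩

lemma IsHyper.mul {k : ℕ} {ζ ξ : Equiv.Perm (Fin (2 * k))} (h : IsHyper ζ) (h' : IsHyper ξ) :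
    IsHyper (ζ * ξ) := by
  rw [isHyper_iff] at *
  intro x
  simp [h, h']

lemma IsHyper.inv {k : ℕ} {ζ : Equiv.Perm (Fin (2 * k))} (h : IsHyper ζ) : IsHyper ζ⁻¹ := by
  rw [isHyper_iff] at *
  intro x
  rw [Equiv.Perm.inv_eq_iff_eq, h]
  simp

lemma isHyper_one {k : ℕ} : IsHyper (1 : Equiv.Perm (Fin (2 * k))) := by
  rw [isHyper_iff]; simp

lemma DeltaO_eq_ite {k : ℕ} {α : Type*} [DecidableEq α] (σ : Equiv.Perm (Fin (2 * k)))
    (j : Fin (2 * k) → α) :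
    (DeltaO σ j : ℝ) = if ∀ x, j (σ (flip k x)) = j (σ x) then 1 else 0 := by
  split_ifs with h
  · exact DeltaO_eq_one σ j fun r => by have := h (hi r); rwa [flip_hi] at this
  · rcases DeltaO_eq_zero_or σ j with h0 | h1
    · exact h0
    · refine absurd (fun x => ?_) h
      rcases lo_or_hi x with ⟨r, rfl⟩ | ⟨r, rfl⟩
      · rw [flip_lo, h1]
      · rw [flip_hi, h1]

lemma DeltaO_mul_hyper {k : ℕ} {α : Type*} [DecidableEq α] (σ ζ : Equiv.Perm (Fin (2 * k)))
    (hζ : IsHyper ζ) (j : Fin (2 * k) → α) : (DeltaO (σ * ζ) j : ℝ) = DeltaO σ j := by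
  rw [isHyper_iff] at hζ
  rw [DeltaO_eq_ite, DeltaO_eq_ite]
  refine if_congr ?_ rfl rfl
  simp only [Equiv.Perm.mul_apply, hζ]
  exact ζ.forall_congr_left.trans (by simp)

lemma DeltaO_perm {k : ℕ} {α : Type*} [DecidableEq α] (σ τ : Equiv.Perm (Fin (2 * k)))
    (j : Fin (2 * k) → α) : (DeltaO σ (j ∘ τ) : ℝ) = DeltaO (τ * σ) j := rfl

/-- The Gram matrix of the pairing tensors. -/
lemma gram {k n : ℕ} (σ ρ : Equiv.Perm (Fin (2 * k))) :
    ∑ j : Fin (2 * k) → Fin n, DeltaO σ j * DeltaO ρ j = (n : ℝ) ^ ccount (σ⁻¹ * ρ) := by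
  rw [← sum_Delta_one, ← Equiv.sum_comp (Equiv.arrowCongr σ (Equiv.refl (Fin n)))]
  refine Finset.sum_congr rfl fun j _ => ?_
  have h : (Equiv.arrowCongr σ (Equiv.refl (Fin n))) j = j ∘ ⇑(σ⁻¹) := rfl
  rw [h, DeltaO_perm, DeltaO_perm, inv_mul_cancel]

/-- Every coset of `H_k` has a representative in `M_{2k}`: order each pair, then sort the pairs
by their smaller member. -/
lemma exists_rep {k : ℕ} (σ : Equiv.Perm (Fin (2 * k))) :
    ∃ τ : Equiv.Perm (Fin (2 * k)), τ ∈ Mset k ∧ IsHyper (τ⁻¹ * σ) := by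
  classical
  let m : Fin k → Fin (2 * k) := fun r => min (σ (lo r)) (σ (hi r))
  let s := Tuple.sort m
  let b : Fin k → Fin (2 * k) := fun r => if σ (lo r) < σ (hi r) then lo r else hi r
  have hb1 : ∀ r, σ (b r) = m r := by
    intro r
    simp only [b, m]
    split_ifs with h
    · rw [min_eq_left h.le]
    · rw [min_eq_right (not_lt.1 h)]
  have hb2 : ∀ r, σ (b r) < σ (flip k (b r)) := by
    intro r
    have hne : σ (lo r) ≠ σ (hi r) := fun h => lo_ne_hi r r (σ.injective h)
    simp only [b]
    split_ifs with h
    · rwa [flip_lo]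
    · rw [flip_hi]; exact lt_of_le_of_ne (not_lt.1 h) hne.symm
  have hb3 : ∀ x : Fin (2 * k), ∃ r, x = b r ∨ x = flip k (b r) := by
    intro x
    rcases lo_or_hi x with ⟨r, rfl⟩ | ⟨r, rfl⟩ <;>
    · refine ⟨r, ?_⟩
      simp only [b]
      split_ifs <;> simp
  let f : Fin k ⊕ Fin k → Fin (2 * k) :=
    Sum.elim (fun r => b (s r)) (fun r => flip k (b (s r)))
  have hsurj : Function.Surjective f := by
    intro x
    obtain ⟨r, hr⟩ := hb3 x
    obtain ⟨r', rfl⟩ := s.surjective r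
    rcases hr with hr | hr
    · exact ⟨Sum.inl r', hr.symm⟩
    · exact ⟨Sum.inr r', hr.symm⟩
  have hbij : Function.Bijective f :=
    (Fintype.bijective_iff_surjective_and_card f).2 ⟨hsurj, by simp; omega⟩
  let ζ : Equiv.Perm (Fin (2 * k)) := (pairEquiv k).symm.trans (Equiv.ofBijective f hbij)
  have hlo : ∀ r, ζ (lo r) = b (s r) := fun r =>
    congrArg f ((pairEquiv k).symm_apply_apply (Sum.inl r))
  have hhi : ∀ r, ζ (hi r) = flip k (b (s r)) := fun r =>
    congrArg f ((pairEquiv k).symm_apply_apply (Sum.inr r))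
  have hζ : IsHyper ζ := by
    rw [isHyper_iff]
    intro x
    rcases lo_or_hi x with ⟨r, rfl⟩ | ⟨r, rfl⟩
    · rw [flip_lo, hlo, hhi]
    · rw [flip_hi, hlo, hhi, flip_flip]
  refine ⟨σ * ζ, ?_, by simpa using hζ.inv⟩
  rw [Mset, Finset.mem_filter]
  refine ⟨mem_univ _, fun r => ?_, ?_⟩
  · simp only [Equiv.Perm.mul_apply, hlo, hhi]
    exact hb2 _
  · have hmono : Monotone fun r => (σ * ζ) (lo r) := by
      have := Tuple.monotone_sort m
      simp only [Equiv.Perm.mul_apply, hlo, hb1]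
      exact this
    exact fun i j hij =>
      (hmono.strictMono_of_injective ((σ * ζ).injective.comp lo_injective)) hij

/-- The elements of `M_{2k}` lie in distinct cosets of `H_k`: the set of smaller members of the
pairs depends only on the coset, and its increasing enumeration is unique. -/
lemma rep_unique {k : ℕ} {τ τ' : Equiv.Perm (Fin (2 * k))} (hτ : τ ∈ Mset k) (hτ' : τ' ∈ Mset k)
    (h : IsHyper (τ⁻¹ * τ')) : τ = τ' := by
  classical
  have key : ∀ {τ τ' : Equiv.Perm (Fin (2 * k))}, τ ∈ Mset k → τ' ∈ Mset k →
      IsHyper (τ⁻¹ * τ') → Set.range (fun r => τ' (lo r)) ⊆ Set.range (fun r => τ (lo r)) := by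
    rintro τ τ' hτ hτ' h _ ⟨r, rfl⟩
    rw [Mset, Finset.mem_filter] at hτ hτ'
    rw [isHyper_iff] at h
    have h1 := h (lo r)
    have h2 := hτ'.2.1 r
    rcases lo_or_hi ((τ⁻¹ * τ') (lo r)) with ⟨j, hj⟩ | ⟨j, hj⟩
    · refine ⟨j, ?_⟩
      simp [← hj]
    · exfalso
      rw [flip_lo, hj, flip_hi] at h1
      simp only [Equiv.Perm.mul_apply, Equiv.Perm.inv_eq_iff_eq] at h1 hj
      rw [h1, hj] at h2
      exact absurd (hτ.2.1 j) (not_lt.2 h2.le)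
  have h' : IsHyper (τ'⁻¹ * τ) := by simpa using h.inv
  have hrange := (key hτ hτ' h).antisymm (key hτ' hτ h')
  have hτm := (Finset.mem_filter.1 hτ).2
  have hτm' := (Finset.mem_filter.1 hτ').2
  have hs : StrictMono fun r : Fin k => τ (lo r) := fun i j hij => hτm.2 i j hij
  have hs' : StrictMono fun r : Fin k => τ' (lo r) := fun i j hij => hτm'.2 i j hij
  have hlo : ∀ r, τ' (lo r) = τ (lo r) := congrFun ((hs'.range_inj hs).1 hrange)
  rw [isHyper_iff] at h
  ext1 x
  rcases lo_or_hi x with ⟨r, rfl⟩ | ⟨r, rfl⟩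
  · exact (hlo r).symm
  · have h1 := h (lo r)
    have h2 : τ⁻¹ (τ (lo r)) = lo r := τ.symm_apply_apply _
    rw [flip_lo, Equiv.Perm.mul_apply, Equiv.Perm.mul_apply, hlo, h2, flip_lo,
      Equiv.Perm.inv_eq_iff_eq] at h1
    exact h1.symm

/-- A right `H_k`-invariant function may be summed over any set of coset representatives, and
`ρ M_{2k}` is another such set. -/
lemma sum_Mset_shift {k : ℕ} (ρ : Equiv.Perm (Fin (2 * k)))
    (F : Equiv.Perm (Fin (2 * k)) → ℝ)
    (hF : ∀ τ ζ, IsHyper ζ → F (τ * ζ) = F τ) :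
    ∑ τ ∈ Mset k, F (ρ * τ) = ∑ τ ∈ Mset k, F τ := by
  choose rep hrep hrepH using exists_rep (k := k)
  have hinj : Set.InjOn (fun τ => rep (ρ * τ)) (Mset k : Set (Equiv.Perm (Fin (2 * k)))) := by
    intro τ hτ τ' hτ' h
    refine rep_unique hτ hτ' ?_
    have h1 := (hrepH (ρ * τ)).inv.mul (hrepH (ρ * τ'))
    simp only at h
    rw [h] at h1
    convert h1 using 1
    group
  have hmaps : Set.MapsTo (fun τ => rep (ρ * τ)) (Mset k : Set (Equiv.Perm (Fin (2 * k))))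
      (Mset k) := fun τ _ => hrep _
  refine Finset.sum_nbij (fun τ => rep (ρ * τ)) (fun τ _ => hrep _) hinj
    (Finset.surjOn_of_injOn_of_card_le _ hmaps hinj le_rfl) fun τ _ => ?_
  rw [← hF (rep (ρ * τ)) _ (hrepH (ρ * τ))]
  simp

/-! ### Inverting the Gram matrix -/

/-- The hypothesis `T^O ⋆ Wg^O = 1_k` says that `Wg^O(τ⁻¹ σ)` is a right inverse of the Gram
matrix on `M_{2k}`; being a square matrix it is also a left inverse. -/
lemma weingarten_left_inverse {k n : ℕ} (WgO : Equiv.Perm (Fin (2 * k)) → ℝ)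
    (hbi : ∀ (σ ζ ζ' : Equiv.Perm (Fin (2 * k))), IsHyper ζ → IsHyper ζ' →
      WgO (ζ * σ * ζ') = WgO σ)
    (hWg : sconv (fun σ => (n : ℝ) ^ ccount σ) WgO = oneH)
    {τ ρ : Equiv.Perm (Fin (2 * k))} (hτ : τ ∈ Mset k) (hρ : ρ ∈ Mset k) :
    ∑ σ ∈ Mset k, WgO (τ⁻¹ * σ) * (n : ℝ) ^ ccount (σ⁻¹ * ρ) = if τ = ρ then 1 else 0 := by
  classical
  let A : Matrix (Mset k) (Mset k) ℝ :=
    Matrix.of fun ρ τ =>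
      (n : ℝ) ^ ccount ((ρ : Equiv.Perm (Fin (2 * k)))⁻¹ * (τ : Equiv.Perm (Fin (2 * k))))
  let B : Matrix (Mset k) (Mset k) ℝ :=
    Matrix.of fun τ σ =>
      WgO ((τ : Equiv.Perm (Fin (2 * k)))⁻¹ * (σ : Equiv.Perm (Fin (2 * k))))
  have hAB : A * B = 1 := by
    ext ρ σ
    have h1 := sum_Mset_shift (ρ : Equiv.Perm (Fin (2 * k)))
      (fun τ => (n : ℝ) ^ ccount ((ρ : Equiv.Perm (Fin (2 * k)))⁻¹ * τ)
        * WgO (τ⁻¹ * (σ : Equiv.Perm (Fin (2 * k))))) (by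
        intro τ ζ hζ
        rw [← gram, ← gram]
        simp only [DeltaO_mul_hyper _ _ hζ]
        have h2 := hbi (τ⁻¹ * (σ : Equiv.Perm (Fin (2 * k)))) ζ⁻¹ 1 hζ.inv isHyper_one
        rw [mul_one] at h2
        rw [_root_.mul_inv_rev, mul_assoc ζ⁻¹, h2])
    have h3 := congrFun hWg ((ρ : Equiv.Perm (Fin (2 * k)))⁻¹ * (σ : Equiv.Perm (Fin (2 * k))))
    simp only [sconv] at h3
    simp only [inv_mul_cancel_left, _root_.mul_inv_rev, mul_assoc] at h1
    rw [Matrix.mul_apply, Matrix.one_apply]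
    simp only [A, B, Matrix.of_apply]
    rw [Finset.sum_coe_sort (Mset k) (fun τ =>
      (n : ℝ) ^ ccount ((ρ : Equiv.Perm (Fin (2 * k)))⁻¹ * τ)
        * WgO (τ⁻¹ * (σ : Equiv.Perm (Fin (2 * k))))), ← h1, h3, oneH]
    refine if_congr ⟨fun h => Subtype.ext (rep_unique ρ.2 σ.2 h), ?_⟩ rfl rfl
    rintro rfl
    rw [inv_mul_cancel]
    exact isHyper_one
  have hBA : B * A = 1 := mul_eq_one_comm.1 hAB
  have h := congrFun (congrFun hBA ⟨τ, hτ⟩) ⟨ρ, hρ⟩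
  rw [Matrix.mul_apply, Matrix.one_apply] at h
  simp only [A, B, Matrix.of_apply, Subtype.mk.injEq] at h
  rw [← h, Finset.sum_coe_sort (Mset k) (fun σ =>
      WgO (τ⁻¹ * σ) * (n : ℝ) ^ ccount (σ⁻¹ * ρ))]

/-! ### The moment formula -/

/-- The tensor of moments `E[w_{i_1 i_2} ⋯ w_{i_{2k-1} i_{2k}}]` of `W = Rᵀ D R`. -/
noncomputable def momTensor {n : ℕ} (k : ℕ) (μ : Measure (OG n)) (D : Matrix (Fin n) (Fin n) ℝ)
    (i : Fin (2 * k) → Fin n) : ℝ :=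
  ∫ R : OG n, tens ((R : Matrix (Fin n) (Fin n) ℝ)ᵀ * D * (R : Matrix (Fin n) (Fin n) ℝ)) i ∂μ

lemma continuous_tens_conj {k n : ℕ} (D : Matrix (Fin n) (Fin n) ℝ) (i : Fin (2 * k) → Fin n) :
    Continuous fun R : OG n =>
      tens ((R : Matrix (Fin n) (Fin n) ℝ)ᵀ * D * (R : Matrix (Fin n) (Fin n) ℝ)) i := by
  have h : Continuous fun R : OG n =>
      (R : Matrix (Fin n) (Fin n) ℝ)ᵀ * D * (R : Matrix (Fin n) (Fin n) ℝ) := by fun_prop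
  unfold tens
  exact continuous_finsetProd _ fun r _ => h.matrix_elem _ _

/-- The law of `W` is invariant under conjugation by `O(n)`, since Haar measure is right
invariant. -/
lemma tact_momTensor {k n : ℕ} (μ : Measure (OG n)) [IsProbabilityMeasure μ]
    (hμ : ∀ g : OG n, μ.map (fun x => g * x) = μ) (D : Matrix (Fin n) (Fin n) ℝ)
    (A : Matrix (Fin n) (Fin n) ℝ) (hA : A * Aᵀ = 1) :
    tact A (momTensor k μ D) = momTensor k μ D := by
  funext i
  let g : OG n := ⟨Aᵀ, (Matrix.mem_orthogonalGroup_iff _ _).2 (by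
    rw [Matrix.transpose_transpose]
    exact mul_eq_one_comm.1 hA)⟩
  have h1 := integral_mul_right μ hμ (continuous_tens_conj D i) g
  rw [momTensor, ← h1]
  simp only [tact, momTensor, ← integral_const_mul]
  rw [← integral_finsetSum _ fun j _ =>
    (integrable_of_continuous μ (continuous_tens_conj D j)).const_mul _]
  refine integral_congr_ae (ae_of_all _ fun R => ?_)
  have h2 := congrFun (tact_tens (k := k) A
    ((R : Matrix (Fin n) (Fin n) ℝ)ᵀ * D * (R : Matrix (Fin n) (Fin n) ℝ))) i
  have h3 : (((R * g : OG n) : Matrix (Fin n) (Fin n) ℝ)ᵀ * D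
      * ((R * g : OG n) : Matrix (Fin n) (Fin n) ℝ))
      = A * ((R : Matrix (Fin n) (Fin n) ℝ)ᵀ * D * (R : Matrix (Fin n) (Fin n) ℝ)) * Aᵀ := by
    have : ((R * g : OG n) : Matrix (Fin n) (Fin n) ℝ)
        = (R : Matrix (Fin n) (Fin n) ℝ) * Aᵀ := rfl
    rw [this]
    simp only [Matrix.transpose_mul, Matrix.transpose_transpose, mul_assoc]
  simp only [h3]
  rw [← h2]
  rfl

/-- Since `Δ_ρ` is invariant, pairing the moments of `W` with `Δ_ρ` removes the randomness. -/
lemma sum_momTensor_DeltaO {k n : ℕ} (μ : Measure (OG n)) [IsProbabilityMeasure μ]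
    (D : Matrix (Fin n) (Fin n) ℝ) (ρ : Equiv.Perm (Fin (2 * k))) :
    ∑ i, momTensor k μ D i * DeltaO ρ i = ∑ i, tens D i * DeltaO ρ i := by
  simp only [momTensor, ← integral_mul_const]
  rw [← integral_finsetSum _ fun j _ =>
    (integrable_of_continuous μ (continuous_tens_conj D j)).mul_const _]
  have h : ∀ R : OG n, ∑ i, tens ((R : Matrix (Fin n) (Fin n) ℝ)ᵀ * D
      * (R : Matrix (Fin n) (Fin n) ℝ)) i * DeltaO ρ i = ∑ i, tens D i * DeltaO ρ i := by
    intro R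
    have h1 := tact_tens (k := k) (R : Matrix (Fin n) (Fin n) ℝ)ᵀ D
    rw [Matrix.transpose_transpose] at h1
    rw [← h1, tact_adjoint, Matrix.transpose_transpose, tact_DeltaO ρ _ (OG.mul_transpose R)]
  simp [h]

lemma tact_sum_DeltaO {k n : ℕ} (c : Equiv.Perm (Fin (2 * k)) → ℝ)
    (A : Matrix (Fin n) (Fin n) ℝ) (hA : A * Aᵀ = 1) :
    tact A (fun i => ∑ σ ∈ Mset k, DeltaO σ i * c σ) = fun i => ∑ σ ∈ Mset k, DeltaO σ i * c σ := by
  funext i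
  simp only [tact, Finset.mul_sum]
  rw [Finset.sum_comm]
  refine Finset.sum_congr rfl fun σ _ => ?_
  rw [← congrFun (tact_DeltaO σ A hA) i, tact, Finset.sum_mul]
  exact Finset.sum_congr rfl fun _ _ => by ring

lemma tact_sub {m n : ℕ} (A : Matrix (Fin n) (Fin n) ℝ) (v w : (Fin m → Fin n) → ℝ) :
    tact A (v - w) = tact A v - tact A w := by
  funext i
  simp [tact, mul_sub]

lemma sum_sconv_DeltaO {k n : ℕ} (WgO T : Equiv.Perm (Fin (2 * k)) → ℝ)
    (hbi : ∀ (σ ζ ζ' : Equiv.Perm (Fin (2 * k))), IsHyper ζ → IsHyper ζ' →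
      WgO (ζ * σ * ζ') = WgO σ)
    (hWg : sconv (fun σ => (n : ℝ) ^ ccount σ) WgO = oneH)
    {ρ : Equiv.Perm (Fin (2 * k))} (hρ : ρ ∈ Mset k) :
    ∑ i : Fin (2 * k) → Fin n, (∑ σ ∈ Mset k, DeltaO σ i * sconv T WgO σ) * DeltaO ρ i = T ρ := by
  classical
  calc _ = ∑ σ ∈ Mset k, sconv T WgO σ * (n : ℝ) ^ ccount (σ⁻¹ * ρ) := by
        simp only [← gram, Finset.sum_mul, Finset.mul_sum]
        rw [Finset.sum_comm]
        exact Finset.sum_congr rfl fun _ _ => Finset.sum_congr rfl fun _ _ => by ring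
    _ = ∑ τ ∈ Mset k, T τ *
          ∑ σ ∈ Mset k, WgO (τ⁻¹ * σ) * (n : ℝ) ^ ccount (σ⁻¹ * ρ) := by
        simp only [sconv, Finset.sum_mul, Finset.mul_sum]
        rw [Finset.sum_comm]
        exact Finset.sum_congr rfl fun _ _ => Finset.sum_congr rfl fun _ _ => by ring
    _ = ∑ τ ∈ Mset k, T τ * if τ = ρ then 1 else 0 :=
        Finset.sum_congr rfl fun τ hτ => by
          rw [weingarten_left_inverse WgO hbi hWg hτ hρ]
    _ = T ρ := by simp [hρ]

/-- Weingarten calculus for class BD I, Theorem 4.2: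
`W = Rᵀ I'_{ab} R`. -/
theorem stmt13 (a b k : ℕ) (hb : 1 ≤ b) (hab : b ≤ a) (hk : 0 < k) (hnk : k ≤ a + b)
    (μ : Measure (OG (a + b))) [IsProbabilityMeasure μ]
    (hμ : ∀ g : OG (a + b), μ.map (fun x => g * x) = μ)
    (WgO : Equiv.Perm (Fin (2 * k)) → ℝ)
    (hbi : ∀ (σ ζ ζ' : Equiv.Perm (Fin (2 * k))), IsHyper ζ → IsHyper ζ' →
      WgO (ζ * σ * ζ') = WgO σ)
    (hWg : sconv (fun σ => ((a + b : ℕ) : ℝ) ^ ccount σ) WgO = oneH)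
    (i : Fin (2 * k) → Fin (a + b)) :
    ∫ R : OG (a + b), ∏ s : Fin k,
        ((R : Matrix (Fin (a + b)) (Fin (a + b)) ℝ)ᵀ * Iab ℝ (a + b) a
          * (R : Matrix (Fin (a + b)) (Fin (a + b)) ℝ)) (i (lo s)) (i (hi s)) ∂μ
      = ∑ σ ∈ Mset k, DeltaO σ i *
          sconv (fun τ => ((a : ℝ) + b) ^ ecomp τ * ((a : ℝ) - b) ^ ocomp τ) WgO σ := by
  set T : Equiv.Perm (Fin (2 * k)) → ℝ :=
    fun τ => ((a : ℝ) + b) ^ ecomp τ * ((a : ℝ) - b) ^ ocomp τ with hT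
  let r : (Fin (2 * k) → Fin (a + b)) → ℝ := fun i => ∑ σ ∈ Mset k, DeltaO σ i * sconv T WgO σ
  suffices h : momTensor k μ (Iab ℝ (a + b) a) - r = 0 from sub_eq_zero.1 (congrFun h i)
  refine eq_zero_of_invariant _ (fun A hA => ?_) fun ρ => ?_
  · rw [tact_sub, tact_momTensor μ hμ _ A hA]
    congr 1
    exact tact_sum_DeltaO _ A hA
    -- `Δ_ρ` only depends on the coset of `ρ`, so `ρ` may be taken in `M_{2k}`.
  · obtain ⟨τ, hτ, hτρ⟩ := exists_rep ρ
    have hΔ : ∀ i : Fin (2 * k) → Fin (a + b), (DeltaO ρ i : ℝ) = DeltaO τ i := fun i => by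
      rw [← DeltaO_mul_hyper τ _ hτρ i, mul_inv_cancel_left]
    simp only [hΔ, Pi.sub_apply, sub_mul, Finset.sum_sub_distrib]
    rw [sum_momTensor_DeltaO, sum_tens_Iab, sum_sconv_DeltaO WgO T hbi hWg hτ, sub_self]

end WgPaper
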